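/- There exists an equilateral convex pentagon (all five side lengths equal to 1) whose interior angles satisfy 2B + A = 360° and 2E + C = 360° (the Type 7 conditions), and this pentagon is unique up to isometries of the plane. -/

import Mathlib

open EuclideanGeometry

noncomputable section

/-- The Euclidean plane. -/
abbrev Plane : Type := EuclideanSpace ℝ (Fin 2)

/-- A convex polygon with `n` vertices: `n` points of the plane in strictly convex
position, labeled in cyclic order (each segment joining cyclically consecutive
vertices lies on the boundary of the convex hull). -/
structure ConvexPolygon (n : ℕ) [NeZero n] where
  V : Fin n → Plane
  strictlyConvex : ∀ i : Fin n, V i ∉ convexHull ℝ (V '' {j | j ≠ i})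
  cyclic : ∀ i : Fin n, segment ℝ (V i) (V (i + 1)) ⊆ frontier (convexHull ℝ (Set.range V))

namespace ConvexPolygon

variable {n : ℕ} [NeZero n]

/-- The polygon, as a subset of the plane (the convex hull of its vertices). -/
def carrier (P : ConvexPolygon n) : Set Plane := convexHull ℝ (Set.range P.V)

/-- The interior angle (in radians) at the `i`-th vertex. -/
def angle (P : ConvexPolygon n) (i : Fin n) : ℝ :=
  EuclideanGeometry.angle (P.V (i - 1)) (P.V i) (P.V (i + 1))

/-- The length of the side joining the `i`-th vertex to the next one. -/
def side (P : ConvexPolygon n) (i : Fin n) : ℝ := dist (P.V i) (P.V (i + 1))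

end ConvexPolygon

/-- A convex pentagon.  Its angles `A, B, C, D, E` are `angle 0, …, angle 4` and
its sides `a, b, c, d, e` are `side 0, …, side 4`. -/
abbrev ConvexPentagon := ConvexPolygon 5

/-- `t` is an isometric copy of `P`. -/
def IsIsometricCopy (t P : Set Plane) : Prop :=
  ∃ g : Plane ≃ᵢ Plane, t = g '' P

/-- `T` is a monohedral tiling of the plane by isometric copies of `P`:
the tiles cover the plane and have pairwise disjoint interiors. -/
def IsMonohedralTiling (P : Set Plane) (T : Set (Set Plane)) : Prop :=
  (∀ t ∈ T, IsIsometricCopy t P) ∧ ⋃₀ T = Set.univ ∧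
    T.Pairwise fun t s => interior t ∩ interior s = ∅

/-- `x` is a vertex (extreme point) of the convex polygonal tile `t`. -/
def IsVertexOf (x : Plane) (t : Set Plane) : Prop := x ∈ Set.extremePoints ℝ t

/-- `e` is an edge (a full side) of the convex polygonal tile `t`: a segment
joining two distinct vertices of `t` that lies on the boundary of `t`. -/
def IsEdgeOf (e t : Set Plane) : Prop :=
  ∃ x y : Plane, x ≠ y ∧ IsVertexOf x t ∧ IsVertexOf y t ∧
    e = segment ℝ x y ∧ e ⊆ frontier t

/-- A tiling by convex polygons is edge-to-edge if any two distinct tiles meet in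
the empty set, a common vertex, or a common edge. -/
def IsEdgeToEdge (T : Set (Set Plane)) : Prop :=
  ∀ t ∈ T, ∀ s ∈ T, t ≠ s →
    t ∩ s = ∅ ∨
    (∃ x : Plane, t ∩ s = {x} ∧ IsVertexOf x t ∧ IsVertexOf x s) ∨
    (∃ e : Set Plane, t ∩ s = e ∧ IsEdgeOf e t ∧ IsEdgeOf e s)

/-- A tiling is periodic if translations by two linearly independent vectors map
every tile onto a tile. -/
def IsPeriodic (T : Set (Set Plane)) : Prop :=
  ∃ u v : Plane, LinearIndependent ℝ ![u, v] ∧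
    (∀ t ∈ T, (fun x => x + u) '' t ∈ T) ∧ (∀ t ∈ T, (fun x => x + v) '' t ∈ T)

/-- An isometry is a symmetry of the tiling `T` if it maps the tiles of `T` onto
the tiles of `T`. -/
def IsSymmetryOf (g : Plane ≃ᵢ Plane) (T : Set (Set Plane)) : Prop :=
  (fun t => g '' t) '' T = T

/-- A tiling is isohedral if its symmetry group acts transitively on the tiles. -/
def IsIsohedral (T : Set (Set Plane)) : Prop :=
  ∀ t ∈ T, ∀ s ∈ T, ∃ g : Plane ≃ᵢ Plane, IsSymmetryOf g T ∧ g '' t = s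

/-- Two tiles are equivalent if some symmetry of the tiling maps one onto the other. -/
def SymEquiv (T : Set (Set Plane)) (t s : Set Plane) : Prop :=
  ∃ g : Plane ≃ᵢ Plane, IsSymmetryOf g T ∧ g '' t = s

/-- A direct (orientation-preserving) isometry of the plane: an affine isometry
whose linear part has positive determinant. -/
def IsDirectIsometry (g : Plane ≃ᵢ Plane) : Prop :=
  ∃ (L : Plane ≃ₗᵢ[ℝ] Plane) (w : Plane),
    0 < LinearMap.det (L.toLinearEquiv : Plane →ₗ[ℝ] Plane) ∧ ∀ x, g x = L x + w

/-- Relabeling of the vertices of a pentagon: a cyclic shift by `k`, with the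
orientation reversed when `r = true`. -/
def relabel (k : Fin 5) (r : Bool) (i : Fin 5) : Fin 5 := if r then k - i else k + i

/-!
Place the side `b` on the segment from `0` to `1` in `ℂ` and traverse the pentagon
counterclockwise. Each side is the next one turned by an interior angle, so the conditions
`A = 2π - 2B` and `C = 2π - 2E` express all five vertices through `exp (i B)` and `exp (i E)`;
since `A, C < π`, both `B` and `E` are obtuse. That the remaining side `d` joins its two end
points determines `cos B` and `sin B` from `E`, and `cos² B + sin² B = 1` becomes
`16 c⁴ - 40 c² + 4 c + 19 = 0` for `c = cos E`. This quartic has exactly one root in `(-1, 0)`,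
so the pentagon is unique; conversely, that root yields vertices each of which lies to the left of
every directed side not containing it, and these form a convex pentagon.
-/

section OrientedPlane

variable {E : Type*} [NormedAddCommGroup E] [InnerProductSpace ℝ E]
  [Fact (Module.finrank ℝ E = 2)] (o : Orientation ℝ E (Fin 2))

/-- Twice the signed area of the triangle `a b c`, positive when the triangle is traversed
counterclockwise with respect to `o`. -/
def orient (a b c : E) : ℝ := o.areaForm (b - a) (c - a)

theorem orient_self_left (a b : E) : orient o a b a = 0 := by
  rw [orient, sub_self, map_zero]

theorem orient_self_right (a b : E) : orient o a b b = 0 :=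
  o.areaForm_apply_self _

theorem orient_rotate (a b c : E) : orient o b c a = orient o a b c := by
  simp only [orient, map_sub, LinearMap.sub_apply, o.areaForm_apply_self]
  rw [o.areaForm_swap c b, o.areaForm_swap c a, o.areaForm_swap b a]
  ring

theorem orient_neg (a b c : E) : orient (-o) a b c = -orient o a b c := by
  simp only [orient, o.areaForm_neg_orientation, LinearMap.neg_apply]

theorem norm_sq_smul_eq_inner_smul_add_areaForm_smul (v w : E) :
    ‖v‖ ^ 2 • w = inner ℝ v w • v + o.areaForm v w • o.rightAngleRotation v := by
  refine ext_inner_right ℝ fun y => ?_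
  rw [inner_add_left, real_inner_smul_left, real_inner_smul_left, real_inner_smul_left,
    o.inner_rightAngleRotation_left, o.inner_mul_inner_add_areaForm_mul_areaForm]

theorem norm_sq_mul_apply_eq_areaForm_mul_apply {f : E →L[ℝ] ℝ} {v : E} (hf : f v = 0) (w : E) :
    ‖v‖ ^ 2 * f w = o.areaForm v w * f (o.rightAngleRotation v) := by
  have h := congrArg f (norm_sq_smul_eq_inner_smul_add_areaForm_smul o v w)
  simpa only [map_add, map_smul, smul_eq_mul, hf, mul_zero, zero_add] using h

theorem orient_eq_zero_iff_collinear {a b c : E} :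
    orient o a b c = 0 ↔ Collinear ℝ {a, b, c} := by
  rw [collinear_iff_of_mem (Set.mem_insert a _)]
  constructor
  · intro h
    rcases eq_or_ne b a with rfl | hab
    · refine ⟨c - b, ?_⟩
      rintro p (rfl | rfl | rfl)
      exacts [⟨0, by simp⟩, ⟨0, by simp⟩, ⟨1, by simp⟩]
    · have hn : ‖b - a‖ ^ 2 ≠ 0 := by simpa using sub_ne_zero.mpr hab
      have hc : c - a = ((‖b - a‖ ^ 2)⁻¹ * inner ℝ (b - a) (c - a)) • (b - a) := by
        have hdecomp := norm_sq_smul_eq_inner_smul_add_areaForm_smul o (b - a) (c - a)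
        rw [show o.areaForm (b - a) (c - a) = 0 from h, zero_smul, add_zero] at hdecomp
        rw [mul_smul, ← hdecomp, inv_smul_smul₀ hn]
      refine ⟨b - a, ?_⟩
      rintro p (rfl | rfl | rfl)
      exacts [⟨0, by simp⟩, ⟨1, by simp⟩, ⟨_, sub_eq_iff_eq_add.mp hc⟩]
  · rintro ⟨v, hv⟩
    obtain ⟨r, hr⟩ := hv b (by simp)
    obtain ⟨t, ht⟩ := hv c (by simp)
    simp [orient, hr, ht, o.areaForm_apply_self]

theorem interior_nonempty_of_orient_ne_zero {K : Set E} (hK : Convex ℝ K) {a b c : E}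
    (ha : a ∈ K) (hb : b ∈ K) (hc : c ∈ K) (h : orient o a b c ≠ 0) :
    (interior K).Nonempty := by
  have hindep : AffineIndependent ℝ ![a, b, c] :=
    affineIndependent_iff_not_collinear_set.mpr ((orient_eq_zero_iff_collinear o).not.mp h)
  have : FiniteDimensional ℝ E := .of_fact_finrank_eq_two
  have htop : affineSpan ℝ (Set.range ![a, b, c]) = ⊤ :=
    hindep.affineSpan_eq_top_iff_card_eq_finrank_add_one.mpr (by
      rw [Fintype.card_fin, Fact.out (p := Module.finrank ℝ E = 2)])
  refine (interior_convexHull_nonempty_iff_affineSpan_eq_top.mpr htop).mono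
    (interior_mono (convexHull_min ?_ hK))
  rintro _ ⟨i, rfl⟩
  fin_cases i
  exacts [ha, hb, hc]

theorem orient_mul_orient_nonneg_of_midpoint_mem_frontier {K : Set E} (hK : Convex ℝ K)
    {a b c d : E} (ha : a ∈ K) (hb : b ∈ K) (hc : c ∈ K) (hd : d ∈ K)
    (hm : midpoint ℝ a b ∈ frontier K) : 0 ≤ orient o a b c * orient o a b d := by
  rcases eq_or_ne (orient o a b c) 0 with h0 | h0
  · rw [h0, zero_mul]
  obtain ⟨f, hf0, hf⟩ := geometric_hahn_banach_of_nonempty_interior_point hK hm.2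
    (interior_nonempty_of_orient_ne_zero o hK ha hb hc h0)
  have hmid : f (midpoint ℝ a b) = (f a + f b) / 2 := by
    rw [midpoint_eq_smul_add, map_smul, map_add, smul_eq_mul, invOf_eq_inv]
    ring
  have hfab : f (b - a) = 0 := by
    rw [map_sub]
    linarith [hf a ha, hf b hb]
  have hkey (x : E) (hx : x ∈ K) :
      orient o a b x * f (o.rightAngleRotation (b - a)) ≤ 0 := by
    rw [orient, ← norm_sq_mul_apply_eq_areaForm_mul_apply o hfab]
    refine mul_nonpos_of_nonneg_of_nonpos (sq_nonneg _) ?_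
    rw [map_sub] at hfab ⊢
    linarith [hf x hx]
  have hJ : f (o.rightAngleRotation (b - a)) ≠ 0 := by
    intro hJ
    have hv : b - a ≠ 0 := by
      intro hv
      simp [orient, hv] at h0
    refine hf0 (ContinuousLinearMap.ext fun w => ?_)
    have hw := norm_sq_mul_apply_eq_areaForm_mul_apply o hfab w
    rw [hJ, mul_zero] at hw
    exact (mul_eq_zero.mp hw).resolve_left (pow_ne_zero 2 (norm_ne_zero_iff.mpr hv))
  have hprod := mul_nonneg_of_nonpos_of_nonpos (hkey c hc) (hkey d hd)
  refine nonneg_of_mul_nonneg_left (b := f (o.rightAngleRotation (b - a)) ^ 2) ?_ (by positivity)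
  linarith

theorem segment_subset_frontier_convexHull {S : Set E} {a b : E} (ha : a ∈ S) (hb : b ∈ S)
    (hab : a ≠ b) (hS : ∀ x ∈ S, 0 ≤ orient o a b x) :
    segment ℝ a b ⊆ frontier (convexHull ℝ S) := by
  have : FiniteDimensional ℝ E := .of_fact_finrank_eq_two
  have hω : o.areaForm (b - a) ≠ 0 := by
    intro h
    have hJ := o.areaForm_rightAngleRotation_right (b - a) (b - a)
    rw [h, LinearMap.zero_apply, eq_comm, inner_self_eq_zero, sub_eq_zero] at hJ
    exact hab hJ.symm
  have hopen : IsOpenMap (o.areaForm (b - a)) :=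
    LinearMap.isOpenMap_of_finiteDimensional _ (LinearMap.surjective hω)
  have hhull : convexHull ℝ S ⊆ {x | o.areaForm (b - a) a ≤ o.areaForm (b - a) x} :=
    convexHull_min (fun x hx => sub_nonneg.mp <| by
      simpa only [orient, map_sub (o.areaForm (b - a))] using hS x hx)
      (convex_halfSpace_ge (o.areaForm (b - a)).isLinear _)
  intro x hx
  refine ⟨subset_closure (segment_subset_convexHull ha hb hx), fun hint => ?_⟩
  have hmem : o.areaForm (b - a) x ∈ interior (Set.Ici (o.areaForm (b - a) a)) :=
    hopen.mapsTo_interior (fun y hy => hhull hy) hint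
  rw [interior_Ici] at hmem
  refine (Set.mem_Ioi.mp hmem).ne ?_
  obtain ⟨t, -, rfl⟩ := (segment_eq_image' ℝ a b).subset hx
  simp only [map_add (o.areaForm (b - a)), map_smul (o.areaForm (b - a)), o.areaForm_apply_self,
    smul_zero, add_zero]

theorem areaForm_eq_norm_mul_norm_mul_sin_angle {x y : E} (h : 0 ≤ o.areaForm x y) :
    o.areaForm x y = ‖x‖ * ‖y‖ * Real.sin (InnerProductGeometry.angle x y) := by
  rw [mul_comm, InnerProductGeometry.sin_angle_mul_norm_mul_norm, real_inner_self_eq_norm_sq,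
    real_inner_self_eq_norm_sq, ← o.inner_sq_add_areaForm_sq, ← sq, add_sub_cancel_left,
    Real.sqrt_sq h]

theorem kahler_eq_norm_mul_norm_mul_exp_angle {x y : E} (h : 0 ≤ o.areaForm x y) :
    o.kahler x y =
      ‖x‖ * ‖y‖ * Complex.exp (InnerProductGeometry.angle x y * Complex.I) := by
  rw [o.kahler_apply_apply, areaForm_eq_norm_mul_norm_mul_sin_angle o h,
    ← InnerProductGeometry.cos_angle_mul_norm_mul_norm, Complex.exp_mul_I, Complex.real_smul]
  push_cast
  ring

theorem kahler_eq_exp_angle_mul_kahler {x y : E} (u : E) (hxy : ‖x‖ = ‖y‖)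
    (h : 0 ≤ o.areaForm x y) :
    o.kahler u y = Complex.exp (InnerProductGeometry.angle x y * Complex.I) * o.kahler u x := by
  rcases eq_or_ne x 0 with rfl | hx
  · simp [norm_eq_zero.mp (norm_zero.symm.trans hxy).symm]
  have hn : (‖x‖ : ℂ) ^ 2 ≠ 0 := by simpa using hx
  refine mul_left_cancel₀ hn ?_
  rw [← o.kahler_mul, kahler_eq_norm_mul_norm_mul_exp_angle o h, ← hxy]
  ring

end OrientedPlane

instance : Fact (Module.finrank ℝ Plane = 2) := ⟨finrank_euclideanSpace_fin⟩

section CyclicIndex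

variable {n : ℕ} [NeZero n]

theorem fin_add_one_ne_self (hn : 2 ≤ n) (i : Fin n) : i + 1 ≠ i := by
  rw [ne_eq, add_eq_left, Fin.one_eq_zero_iff]
  lia

theorem fin_add_one_add_one_ne_self (hn : 3 ≤ n) (i : Fin n) : i + 1 + 1 ≠ i := by
  rw [add_assoc, ne_eq, add_eq_left, Fin.ext_iff, Fin.val_add, Fin.val_one', Fin.val_zero,
    Nat.mod_eq_of_lt (by lia : 1 < n), Nat.mod_eq_of_lt (by lia : 1 + 1 < n)]
  lia

theorem fin_induction_add_one {p : Fin n → Prop} (zero : p 0) (add_one : ∀ i, p i → p (i + 1))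
    (i : Fin n) : p i := by
  obtain ⟨m, rfl⟩ := Nat.exists_eq_succ_of_ne_zero (NeZero.ne n)
  refine Fin.induction zero (fun j hj => ?_) i
  simpa only [Fin.coeSucc_eq_succ] using add_one _ hj

end CyclicIndex

namespace ConvexPolygon

section

variable {n : ℕ} [NeZero n]

theorem notMem_segment (P : ConvexPolygon n) {i j k : Fin n} (hj : j ≠ i) (hk : k ≠ i) :
    P.V i ∉ segment ℝ (P.V j) (P.V k) := fun h =>
  P.strictlyConvex i <| segment_subset_convexHull (Set.mem_image_of_mem P.V hj)
    (Set.mem_image_of_mem P.V hk) h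

theorem not_collinear (P : ConvexPolygon n) {i j k : Fin n} (hij : i ≠ j) (hjk : j ≠ k)
    (hik : i ≠ k) : ¬Collinear ℝ {P.V i, P.V j, P.V k} := by
  intro h
  rcases h.wbtw_or_wbtw_or_wbtw with h | h | h
  · exact P.notMem_segment hij hjk.symm (mem_segment_iff_wbtw.mpr h)
  · exact P.notMem_segment hjk hik (mem_segment_iff_wbtw.mpr h)
  · exact P.notMem_segment hik.symm hij.symm (mem_segment_iff_wbtw.mpr h)

theorem angle_mem_Ioo (P : ConvexPolygon n) (hn : 3 ≤ n) (i : Fin n) :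
    P.angle i ∈ Set.Ioo 0 Real.pi := by
  obtain ⟨j, rfl⟩ : ∃ j, i = j + 1 := ⟨i - 1, (sub_add_cancel i 1).symm⟩
  have h : ¬Collinear ℝ {P.V j, P.V (j + 1), P.V (j + 1 + 1)} :=
    P.not_collinear (fin_add_one_ne_self (by lia) j).symm
      (fin_add_one_ne_self (by lia) (j + 1)).symm (fin_add_one_add_one_ne_self hn j).symm
  rw [angle, add_sub_cancel_right]
  exact ⟨angle_pos_of_not_collinear h, angle_lt_pi_of_not_collinear h⟩

variable (P : ConvexPolygon n) (o : Orientation ℝ Plane (Fin 2))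

theorem orient_mul_orient_nonneg (i j k : Fin n) :
    0 ≤ orient o (P.V i) (P.V (i + 1)) (P.V j) * orient o (P.V i) (P.V (i + 1)) (P.V k) := by
  have hmem (l : Fin n) : P.V l ∈ convexHull ℝ (Set.range P.V) :=
    subset_convexHull ℝ _ (Set.mem_range_self l)
  exact orient_mul_orient_nonneg_of_midpoint_mem_frontier o (convex_convexHull ℝ _)
    (hmem _) (hmem _) (hmem _) (hmem _) (P.cyclic i (midpoint_mem_segment _ _))

theorem orient_ne_zero {i j k : Fin n} (hij : i ≠ j) (hjk : j ≠ k) (hik : i ≠ k) :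
    orient o (P.V i) (P.V j) (P.V k) ≠ 0 :=
  (orient_eq_zero_iff_collinear o).not.mpr (P.not_collinear hij hjk hik)

theorem orient_pos_of_orient_pos {i j k : Fin n}
    (hj : 0 < orient o (P.V i) (P.V (i + 1)) (P.V j)) (hk : k ≠ i) (hk' : k ≠ i + 1) :
    0 < orient o (P.V i) (P.V (i + 1)) (P.V k) := by
  have hi : i ≠ i + 1 := by
    intro hi
    rw [← hi] at hj
    simp [orient] at hj
  exact (nonneg_of_mul_nonneg_right (P.orient_mul_orient_nonneg o i j k) hj).lt_of_ne'
    (P.orient_ne_zero o hi hk'.symm hk.symm)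

theorem exists_orientation_forall_orient_pos (hn : 3 ≤ n) :
    ∃ o : Orientation ℝ Plane (Fin 2), ∀ i j : Fin n, j ≠ i → j ≠ i + 1 →
      0 < orient o (P.V i) (P.V (i + 1)) (P.V j) := by
  have hne₁ (i : Fin n) : i + 1 ≠ i := fin_add_one_ne_self (by lia) i
  have hne₂ (i : Fin n) : i + 1 + 1 ≠ i := fin_add_one_add_one_ne_self hn i
  obtain ⟨o, ho⟩ : ∃ o : Orientation ℝ Plane (Fin 2),
      0 < orient o (P.V 0) (P.V (0 + 1)) (P.V (0 + 1 + 1)) := by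
    let o : Orientation ℝ Plane (Fin 2) := (EuclideanSpace.basisFun (Fin 2) ℝ).toBasis.orientation
    rcases (P.orient_ne_zero o (hne₁ 0).symm (hne₁ _).symm (hne₂ 0).symm).lt_or_gt with h | h
    · exact ⟨-o, by rwa [orient_neg, neg_pos]⟩
    · exact ⟨o, h⟩
  have hnext : ∀ i, 0 < orient o (P.V i) (P.V (i + 1)) (P.V (i + 1 + 1)) :=
    fin_induction_add_one ho fun i hi =>
      P.orient_pos_of_orient_pos o (by rwa [orient_rotate]) (hne₂ _) (hne₁ _)
  exact ⟨o, fun i j => P.orient_pos_of_orient_pos o (hnext i)⟩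

end

section

variable {n : ℕ} [NeZero n] {V : Fin n → Plane} {o : Orientation ℝ Plane (Fin 2)}

theorem notMem_convexHull_of_orient_pos (hn : 3 ≤ n)
    (hV : ∀ i j, j ≠ i → j ≠ i + 1 → 0 < orient o (V i) (V (i + 1)) (V j)) (i : Fin n) :
    V i ∉ convexHull ℝ (V '' {j | j ≠ i}) := by
  obtain ⟨k, rfl⟩ : ∃ k, i = k + 1 := ⟨i - 1, (sub_add_cancel i 1).symm⟩
  -- The functional vanishing along the diagonal through the two neighbours of `V (k + 1)`.
  let f := o.areaForm (V (k + 1 + 1) - V k)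
  suffices h : convexHull ℝ (V '' {j | j ≠ k + 1}) ⊆ {x | f (V (k + 1)) < f x} from
    fun hmem => by simpa using h hmem
  refine convexHull_min ?_ (convex_halfSpace_gt f.isLinear _)
  rintro _ ⟨j, hj, rfl⟩
  have hsum : f (V j) - f (V (k + 1)) =
      orient o (V k) (V (k + 1)) (V j) + orient o (V (k + 1)) (V (k + 1 + 1)) (V j) := by
    simp only [f, orient, map_sub, LinearMap.sub_apply, o.areaForm_apply_self,
      o.areaForm_swap (V (k + 1)) (V k)]
    ring
  change f (V (k + 1)) < f (V j)
  rw [← sub_pos, hsum]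
  rcases eq_or_ne j k with rfl | hjk
  · rw [orient_self_left, zero_add]
    exact hV _ _ hj (fin_add_one_add_one_ne_self hn j).symm
  · refine add_pos_of_pos_of_nonneg (hV _ _ hjk hj) ?_
    rcases eq_or_ne j (k + 1 + 1) with rfl | hj'
    · exact (orient_self_right o _ _).ge
    · exact (hV _ _ hj hj').le

/-- The convex polygon whose vertices `V` all lie strictly to the left of each directed side
`V i`, `V (i + 1)`, apart from the ends of that side. -/
def ofOrientPos (hn : 3 ≤ n)
    (hV : ∀ i j, j ≠ i → j ≠ i + 1 → 0 < orient o (V i) (V (i + 1)) (V j)) : ConvexPolygon n where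
  V := V
  strictlyConvex := notMem_convexHull_of_orient_pos hn hV
  cyclic i := by
    have hpos := hV i (i + 1 + 1) (fin_add_one_add_one_ne_self hn i)
      (fin_add_one_ne_self (by lia) (i + 1))
    refine segment_subset_frontier_convexHull o (Set.mem_range_self i)
      (Set.mem_range_self (i + 1)) (fun h => ?_) ?_
    · simp [orient, h] at hpos
    · rintro _ ⟨j, rfl⟩
      rcases eq_or_ne j i with rfl | hj
      · exact (orient_self_left o _ _).ge
      rcases eq_or_ne j (i + 1) with rfl | hj'
      · exact (orient_self_right o _ _).ge
      exact (hV i j hj hj').le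

theorem image_carrier {P Q : ConvexPolygon n} (g : Plane ≃ᵃⁱ[ℝ] Plane)
    (hg : ∀ i, g (P.V i) = Q.V i) : g '' P.carrier = Q.carrier := by
  rw [carrier, carrier, ← funext hg, ← Function.comp_def g P.V, Set.range_comp]
  exact g.toAffineEquiv.toAffineMap.image_convexHull _

end

end ConvexPolygon

attribute [local instance] Complex.finrank_real_complex_fact

open Complex in
/-- The vertices of the equilateral Type 7 pentagon with angles `B` and `E`, in the complex
coordinate in which its second side runs from `0` to `1`. -/
def typeSevenVertex (B E : ℝ) : Fin 5 → ℂ :=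
  ![exp (B * I), 0, 1, 1 - exp (E * I) ^ 2, exp (B * I) - exp (-(B * I))]

/-- The pairs of angles `B`, `E` of an equilateral Type 7 pentagon: both are obtuse, and the
fourth side, whose direction is prescribed by the angles, joins the last two vertices of
`typeSevenVertex B E`. -/
structure IsTypeSevenPair (B E : ℝ) : Prop where
  mem_left : B ∈ Set.Ioo (Real.pi / 2) Real.pi
  mem_right : E ∈ Set.Ioo (Real.pi / 2) Real.pi
  closing : typeSevenVertex B E 3 - typeSevenVertex B E 4 = Complex.exp ((E - B) * Complex.I)

theorem cos_neg_of_mem_Ioo {θ : ℝ} (h : θ ∈ Set.Ioo (Real.pi / 2) Real.pi) : Real.cos θ < 0 :=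
  Real.cos_neg_of_pi_div_two_lt_of_lt h.1 (by linarith [h.2, Real.pi_pos])

theorem sin_pos_of_mem_Ioo {θ : ℝ} (h : θ ∈ Set.Ioo (Real.pi / 2) Real.pi) : 0 < Real.sin θ :=
  Real.sin_pos_of_pos_of_lt_pi (by linarith [h.1, Real.pi_pos]) h.2

theorem exists_mem_Ioo_cos_eq_sin_eq {x y : ℝ} (hx : x < 0) (hy : 0 < y)
    (h : x ^ 2 + y ^ 2 = 1) :
    ∃ θ ∈ Set.Ioo (Real.pi / 2) Real.pi, Real.cos θ = x ∧ Real.sin θ = y := by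
  have hx1 : -1 < x := by nlinarith
  refine ⟨Real.arccos x, ⟨?_, ?_⟩, Real.cos_arccos hx1.le (by linarith), ?_⟩
  · exact not_le.mp (Real.arccos_le_pi_div_two.not.mpr hx.not_ge)
  · exact Real.arccos_lt_pi.mpr hx1
  · rw [Real.sin_arccos, ← Real.sqrt_sq hy.le, ← h, add_sub_cancel_left]

theorem typeSevenVertex_eq (B E : ℝ) :
    typeSevenVertex B E = ![⟨Real.cos B, Real.sin B⟩, 0, 1,
      ⟨2 * Real.sin E ^ 2, -(2 * Real.cos E * Real.sin E)⟩, ⟨0, 2 * Real.sin B⟩] := by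
  have hexp (θ : ℝ) : Complex.exp (θ * Complex.I) = ⟨Real.cos θ, Real.sin θ⟩ :=
    Complex.ext (Complex.exp_ofReal_mul_I_re θ) (Complex.exp_ofReal_mul_I_im θ)
  have hinv : Complex.exp (-(B * Complex.I)) = ⟨Real.cos B, -Real.sin B⟩ := by
    rw [← neg_mul, ← Complex.ofReal_neg, hexp, Real.cos_neg, Real.sin_neg]
  have h3 : 1 - (⟨Real.cos E, Real.sin E⟩ : ℂ) ^ 2 =
      ⟨2 * Real.sin E ^ 2, -(2 * Real.cos E * Real.sin E)⟩ := by
    refine Complex.ext ?_ ?_ <;>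
      simp only [sq, Complex.sub_re, Complex.sub_im, Complex.one_re, Complex.one_im,
        Complex.mul_re, Complex.mul_im]
    · linear_combination -Real.sin_sq_add_cos_sq E
    · ring
  have h4 : (⟨Real.cos B, Real.sin B⟩ : ℂ) - ⟨Real.cos B, -Real.sin B⟩ = ⟨0, 2 * Real.sin B⟩ :=
    Complex.ext (sub_self _) ((sub_neg_eq_add _ _).trans (two_mul _).symm)
  rw [typeSevenVertex, hexp, hexp, hinv, h3, h4]

-- Expanding `cos (E - B)` and `sin (E - B)` turns the closing condition into a linear system in
-- `cos B` and `sin B`, of determinant `2 * cos E - 1`.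
theorem typeSevenVertex_closing_iff {B E : ℝ} (hE : 1 - 2 * Real.cos E ≠ 0) :
    typeSevenVertex B E 3 - typeSevenVertex B E 4 = Complex.exp ((E - B) * Complex.I) ↔
      (1 - 2 * Real.cos E) * Real.cos B = -(4 * Real.sin E ^ 2) ∧
        (1 - 2 * Real.cos E) * Real.sin B = 2 * Real.sin E := by
  have hsq := Real.sin_sq_add_cos_sq E
  rw [typeSevenVertex_eq, ← Complex.ofReal_sub, Complex.ext_iff, Complex.exp_ofReal_mul_I_re,
    Complex.exp_ofReal_mul_I_im, Real.cos_sub, Real.sin_sub]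
  simp only [Matrix.cons_val, Complex.sub_re, Complex.sub_im]
  constructor
  · rintro ⟨hre, him⟩
    constructor
    · linear_combination (2 - Real.cos E) * hre - Real.sin E * him - Real.cos B * hsq
    · linear_combination -Real.sin E * hre + Real.cos E * him + (2 * Real.sin E - Real.sin B) * hsq
  · rintro ⟨hcos, hsin⟩
    constructor <;> refine mul_left_cancel₀ hE ?_
    · linear_combination -Real.cos E * hcos - Real.sin E * hsin
    · linear_combination -Real.sin E * hcos - (2 - Real.cos E) * hsin + 4 * Real.sin E * hsq

namespace IsTypeSevenPair

variable {B E : ℝ}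

theorem cos_eq (h : IsTypeSevenPair B E) :
    (1 - 2 * Real.cos E) * Real.cos B = -(4 * Real.sin E ^ 2) :=
  ((typeSevenVertex_closing_iff (by linarith [cos_neg_of_mem_Ioo h.mem_right])).mp h.closing).1

theorem sin_eq (h : IsTypeSevenPair B E) :
    (1 - 2 * Real.cos E) * Real.sin B = 2 * Real.sin E :=
  ((typeSevenVertex_closing_iff (by linarith [cos_neg_of_mem_Ioo h.mem_right])).mp h.closing).2

theorem quartic_eq_zero (h : IsTypeSevenPair B E) :
    16 * Real.cos E ^ 4 - 40 * Real.cos E ^ 2 + 4 * Real.cos E + 19 = 0 := by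
  have hsum : (4 * Real.sin E ^ 2) ^ 2 + (2 * Real.sin E) ^ 2 = (1 - 2 * Real.cos E) ^ 2 := by
    rw [← neg_sq (4 * Real.sin E ^ 2), ← h.cos_eq, ← h.sin_eq]
    linear_combination (1 - 2 * Real.cos E) ^ 2 * Real.sin_sq_add_cos_sq B
  linear_combination hsum -
    (16 * (Real.sin E ^ 2 + 1 - Real.cos E ^ 2) + 4) * Real.sin_sq_add_cos_sq E

end IsTypeSevenPair

theorem quartic_injOn {x y : ℝ} (hx : x ∈ Set.Ioo (-1) 0) (hy : y ∈ Set.Ioo (-1) 0)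
    (hfx : 16 * x ^ 4 - 40 * x ^ 2 + 4 * x + 19 = 0)
    (hfy : 16 * y ^ 4 - 40 * y ^ 2 + 4 * y + 19 = 0) : x = y := by
  have hfactor : (x - y) * (16 * (x + y) * (x ^ 2 + y ^ 2) - 40 * (x + y) + 4) = 0 := by
    linear_combination hfx - hfy
  refine sub_eq_zero.mp ((mul_eq_zero.mp hfactor).resolve_right (ne_of_gt ?_))
  nlinarith [hx.1, hx.2, hy.1, hy.2]

theorem exists_quartic_root :
    ∃ x ∈ Set.Ioo (-1 : ℝ) 0, 16 * x ^ 4 - 40 * x ^ 2 + 4 * x + 19 = 0 := by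
  refine intermediate_value_Ioo (by norm_num : (-1 : ℝ) ≤ 0)
    (f := fun x => 16 * x ^ 4 - 40 * x ^ 2 + 4 * x + 19) (by fun_prop) ?_
  norm_num

theorem exists_isTypeSevenPair : ∃ B E : ℝ, IsTypeSevenPair B E := by
  obtain ⟨c, ⟨hc1, hc0⟩, hc⟩ := exists_quartic_root
  have hs : 0 < 1 - c ^ 2 := by nlinarith
  have hden : 0 < 1 - 2 * c := by linarith
  obtain ⟨E, hE, rfl, -⟩ := exists_mem_Ioo_cos_eq_sin_eq hc0 (Real.sqrt_pos.mpr hs)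
    (by rw [Real.sq_sqrt hs.le, add_sub_cancel])
  have hs0 : 0 < Real.sin E := sin_pos_of_mem_Ioo hE
  have hsq := Real.sin_sq_add_cos_sq E
  obtain ⟨B, hB, hcB, hsB⟩ := exists_mem_Ioo_cos_eq_sin_eq
    (x := -(4 * Real.sin E ^ 2) / (1 - 2 * Real.cos E))
    (y := 2 * Real.sin E / (1 - 2 * Real.cos E))
    (div_neg_of_neg_of_pos (by nlinarith) hden) (by positivity) (by
      rw [div_pow, div_pow, ← add_div, div_eq_one_iff_eq (by positivity)]
      linear_combination hc + (16 * (Real.sin E ^ 2 + 1 - Real.cos E ^ 2) + 4) * hsq)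
  refine ⟨B, E, hB, hE, (typeSevenVertex_closing_iff hden.ne').mpr ⟨?_, ?_⟩⟩
  · rw [hcB, mul_div_cancel₀ _ hden.ne']
  · rw [hsB, mul_div_cancel₀ _ hden.ne']

-- With `b, t, c, s` the cosine and sine of `B` and of `E`, the three quantities are the values of
-- `orient` on the vertices `2, 3, 4`, on `2, 3, 0` and on `3, 4, 0` of `typeSevenVertex B E`.
theorem typeSevenVertex_cross_pos {b t c s : ℝ} (hc : c ∈ Set.Ioo (-1) 0) (hs : 0 < s)
    (hsq : s ^ 2 + c ^ 2 = 1) (hb : (1 - 2 * c) * b = -(4 * s ^ 2))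
    (ht : (1 - 2 * c) * t = 2 * s) :
    0 < 2 * t * (2 * s ^ 2 - 1) - 2 * c * s ∧ 0 < (2 * s ^ 2 - 1) * t + 2 * c * s * (b - 1) ∧
      0 < 2 * s ^ 2 * t - 2 * t * b - 2 * c * s * b := by
  obtain ⟨hc1, hc0⟩ := hc
  have hden : 0 < 1 - 2 * c := by linarith
  have hc2 : 0 < 1 - c ^ 2 := by nlinarith
  refine ⟨?_, ?_, ?_⟩
  · refine pos_of_mul_pos_right (?_ : 0 < (1 - 2 * c) * _) hden.le
    calc 0 < 2 * s * (2 * (1 - c ^ 2) - c) := mul_pos (by positivity) (by linarith)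
      _ = _ := by grind
  · refine pos_of_mul_pos_right (?_ : 0 < (1 - 2 * c) * _) hden.le
    have hcc : 0 < -c * (1 - c ^ 2) := mul_pos (by linarith) hc2
    calc 0 < 2 * s * (1 - c + 4 * (-c * (1 - c ^ 2))) := mul_pos (by positivity) (by linarith)
      _ = _ := by grind
  · refine pos_of_mul_pos_right (?_ : 0 < (1 - 2 * c) ^ 2 * _) (by positivity)
    calc 0 < 4 * s ^ 3 * (1 + 4 * s ^ 2) := by positivity
      _ = _ := by grind

theorem orient_complex (x y z : ℂ) : orient Complex.orientation x y z =
    (y.re - x.re) * (z.im - x.im) - (y.im - x.im) * (z.re - x.re) := by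
  simp only [orient, Complex.areaForm, Complex.mul_im, Complex.conj_re, Complex.conj_im,
    Complex.sub_re, Complex.sub_im]
  ring

namespace IsTypeSevenPair

variable {B E : ℝ}

theorem cos_right_mem_Ioo (h : IsTypeSevenPair B E) : Real.cos E ∈ Set.Ioo (-1) 0 := by
  have hcos := cos_neg_of_mem_Ioo h.mem_right
  have hsin := sin_pos_of_mem_Ioo h.mem_right
  exact ⟨by nlinarith [Real.sin_sq_add_cos_sq E], hcos⟩

theorem unique {B' E' : ℝ} (h : IsTypeSevenPair B E) (h' : IsTypeSevenPair B' E') :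
    B = B' ∧ E = E' := by
  have hinj : Set.InjOn Real.cos (Set.Ioo (Real.pi / 2) Real.pi) :=
    Real.injOn_cos.mono <|
      Set.Ioo_subset_Icc_self.trans (Set.Icc_subset_Icc_left (by positivity))
  obtain rfl : E = E' := hinj h.mem_right h'.mem_right <|
    quartic_injOn h.cos_right_mem_Ioo h'.cos_right_mem_Ioo h.quartic_eq_zero h'.quartic_eq_zero
  have hden : 1 - 2 * Real.cos E ≠ 0 := by linarith [h.cos_right_mem_Ioo.2]
  exact ⟨hinj h.mem_left h'.mem_left
    (mul_left_cancel₀ hden (h.cos_eq.trans h'.cos_eq.symm)), rfl⟩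

theorem orient_pos (h : IsTypeSevenPair B E) (i j : Fin 5) (hj : j ≠ i) (hj' : j ≠ i + 1) :
    0 < orient Complex.orientation (typeSevenVertex B E i) (typeSevenVertex B E (i + 1))
      (typeSevenVertex B E j) := by
  have hb := cos_neg_of_mem_Ioo h.mem_left
  have ht := sin_pos_of_mem_Ioo h.mem_left
  have hc := cos_neg_of_mem_Ioo h.mem_right
  have hs := sin_pos_of_mem_Ioo h.mem_right
  obtain ⟨h234, h230, h340⟩ := typeSevenVertex_cross_pos h.cos_right_mem_Ioo hs
    (Real.sin_sq_add_cos_sq E) h.cos_eq h.sin_eq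
  rw [typeSevenVertex_eq, orient_complex]
  generalize Real.cos B = b, Real.sin B = t, Real.cos E = c, Real.sin E = s at *
  have hcs : 0 < -c * s := mul_pos (neg_pos.mpr hc) hs
  have hbt : 0 < -b * t := mul_pos (neg_pos.mpr hb) ht
  have hst : 0 < s ^ 2 * t := by positivity
  have hbcs : 0 < b * c * s := mul_pos (mul_pos_of_neg_of_neg hb hc) hs
  fin_cases i <;> fin_cases j <;>
    first
    | exact absurd rfl hj
    | exact absurd rfl hj'
    | simp only [Fin.zero_eta, Fin.mk_one, Fin.reduceFinMk, Fin.isValue, Fin.reduceAdd, zero_add,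
        Matrix.cons_val, Complex.zero_re, Complex.zero_im, Complex.one_re, Complex.one_im]
      linarith

end IsTypeSevenPair

section Coordinates

variable {E : Type*} [NormedAddCommGroup E] [InnerProductSpace ℝ E]
  [Fact (Module.finrank ℝ E = 2)] (o : Orientation ℝ E (Fin 2))

theorem exists_affineIsometryEquiv_eq_kahler (a : E) {u : E} (hu : ‖u‖ = 1) :
    ∃ ψ : E ≃ᵃⁱ[ℝ] ℂ, ∀ x, ψ x = o.kahler u (x - a) := by
  have : FiniteDimensional ℝ E := .of_fact_finrank_eq_two
  let L : E →ₗᵢ[ℝ] ℂ := ⟨o.kahler u, fun x => by rw [o.norm_kahler, hu, one_mul]⟩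
  have hdim : Module.finrank ℝ E = Module.finrank ℝ ℂ := by
    rw [Complex.finrank_real_complex, Fact.out (p := Module.finrank ℝ E = 2)]
  exact ⟨(AffineIsometryEquiv.vaddConst ℝ a).symm.trans
    (L.toLinearIsometryEquiv hdim).toAffineIsometryEquiv, fun x => rfl⟩

theorem orient_map {F : Type*} [NormedAddCommGroup F] [InnerProductSpace ℝ F]
    [Fact (Module.finrank ℝ F = 2)] (φ : E ≃ₗᵢ[ℝ] F) (a b c : E) :
    orient (Orientation.map (Fin 2) φ.toLinearEquiv o) (φ a) (φ b) (φ c) = orient o a b c := by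
  rw [orient, ← map_sub φ, ← map_sub φ, o.areaForm_map, φ.symm_apply_apply, φ.symm_apply_apply,
    orient]

theorem angle_eq_of_sub_eq_exp_mul_sub {x y z : ℂ} {θ : ℝ} (hθ : θ ∈ Set.Icc 0 Real.pi)
    (hzy : z ≠ y) (h : x - y = Complex.exp (θ * Complex.I) * (z - y)) : ∠ x y z = θ := by
  rw [angle, vsub_eq_sub, vsub_eq_sub, h]
  nth_rw 2 [← one_mul (z - y)]
  rw [Complex.angle_mul_right (sub_ne_zero.mpr hzy), Complex.angle_exp_one,
    (toIocMod_eq_self _).mpr ⟨by linarith [hθ.1, Real.pi_pos], by linarith [hθ.2]⟩,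
    abs_of_nonneg hθ.1]

theorem exp_mul_exp_sq_eq_one {θ φ : ℝ} (h : 2 * θ + φ = 2 * Real.pi) :
    Complex.exp (φ * Complex.I) * Complex.exp (θ * Complex.I) ^ 2 = 1 := by
  rw [← Complex.exp_nat_mul, ← Complex.exp_add, ← Complex.exp_two_pi_mul_I]
  congr 1
  have h' : (2 * θ + φ : ℂ) = 2 * Real.pi := mod_cast h
  push_cast
  linear_combination Complex.I * h'

end Coordinates

theorem ConvexPolygon.kahler_sub_eq_exp_angle_mul {n : ℕ} [NeZero n] (P : ConvexPolygon n)
    (hn : 3 ≤ n) {o : Orientation ℝ Plane (Fin 2)}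
    (ho : ∀ i j, j ≠ i → j ≠ i + 1 → 0 < orient o (P.V i) (P.V (i + 1)) (P.V j)) {i : Fin n}
    (hside : P.side i = P.side (i + 1)) (u : Plane) :
    o.kahler u (P.V i - P.V (i + 1)) = Complex.exp (P.angle (i + 1) * Complex.I) *
      o.kahler u (P.V (i + 1 + 1) - P.V (i + 1)) := by
  rw [angle, add_sub_cancel_right, angle_comm]
  refine kahler_eq_exp_angle_mul_kahler o u ?_ ?_
  · change dist (P.V (i + 1 + 1)) (P.V (i + 1)) = dist (P.V i) (P.V (i + 1))
    rw [dist_comm]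
    exact hside.symm
  · exact (ho (i + 1) i (fin_add_one_ne_self (by lia) i).symm
      (fin_add_one_add_one_ne_self hn i).symm).le

/-- The equilateral Type 7 pentagons with unit sides: `2B + A = 360°` and `2E + C = 360°`. -/
structure IsUnitTypeSeven (P : ConvexPentagon) : Prop where
  side_eq_one : ∀ i, P.side i = 1
  angle_B_A : 2 * P.angle 1 + P.angle 0 = 2 * Real.pi
  angle_E_C : 2 * P.angle 4 + P.angle 2 = 2 * Real.pi

namespace IsUnitTypeSeven

variable {P Q : ConvexPentagon}

theorem exists_typeSevenVertex_eq (h : IsUnitTypeSeven P) :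
    ∃ ψ : Plane ≃ᵃⁱ[ℝ] ℂ,
      (∀ i, ψ (P.V i) = typeSevenVertex (P.angle 1) (P.angle 4) i) ∧
      ψ (P.V 3) - ψ (P.V 4) = Complex.exp ((P.angle 4 - P.angle 1) * Complex.I) := by
  obtain ⟨o, ho⟩ := P.exists_orientation_forall_orient_pos (by norm_num)
  have hu : ‖P.V 2 - P.V 1‖ = 1 := by
    rw [← dist_eq_norm, dist_comm]
    exact h.side_eq_one 1
  obtain ⟨ψ, hψ⟩ := exists_affineIsometryEquiv_eq_kahler o (P.V 1) hu
  have hrot (i : Fin 5) : ψ (P.V i) - ψ (P.V (i + 1)) = Complex.exp (P.angle (i + 1) * Complex.I) *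
      (ψ (P.V (i + 1 + 1)) - ψ (P.V (i + 1))) := by
    simpa only [hψ, ← map_sub, sub_sub_sub_cancel_right] using
      P.kahler_sub_eq_exp_angle_mul (by norm_num) ho
        ((h.side_eq_one i).trans (h.side_eq_one (i + 1)).symm) (P.V 2 - P.V 1)
  have hA := exp_mul_exp_sq_eq_one h.angle_B_A
  have hC := exp_mul_exp_sq_eq_one h.angle_E_C
  have hB : Complex.exp (P.angle 0 * Complex.I) * Complex.exp (P.angle 1 * Complex.I) =
      Complex.exp (-(P.angle 1 * Complex.I)) := by
    rw [Complex.exp_neg]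
    exact eq_inv_of_mul_eq_one_left (by rw [mul_assoc, ← sq, hA])
  have h1 : ψ (P.V 1) = 0 := by rw [hψ, sub_self, map_zero]
  have h2 : ψ (P.V 2) = 1 := by rw [hψ, o.kahler_apply_self, hu, Complex.ofReal_one, one_pow]
  have h0 : ψ (P.V 0) = Complex.exp (P.angle 1 * Complex.I) := by
    have hrot0 := hrot 0
    simp only [Fin.isValue, Fin.reduceAdd, h1, h2] at hrot0
    linear_combination hrot0
  have h3 : ψ (P.V 3) = 1 - Complex.exp (P.angle 4 * Complex.I) ^ 2 := by
    have hrot1 := hrot 1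
    simp only [Fin.isValue, Fin.reduceAdd, h1, h2] at hrot1
    linear_combination (1 - ψ (P.V 3)) * hC - Complex.exp (P.angle 4 * Complex.I) ^ 2 * hrot1
  have h4 : ψ (P.V 4) =
      Complex.exp (P.angle 1 * Complex.I) - Complex.exp (-(P.angle 1 * Complex.I)) := by
    have hrot4 := hrot 4
    simp only [Fin.isValue, Fin.reduceAdd, h1, h0] at hrot4
    linear_combination hrot4 - hB
  refine ⟨ψ, fun i => ?_, ?_⟩
  · fin_cases i
    exacts [h0, h1, h2, h3, h4]
  · have hrot3 := hrot 3
    simp only [Fin.isValue, Fin.reduceAdd, h0] at hrot3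
    rw [hrot3, h4, sub_sub_cancel, ← Complex.exp_add, sub_mul, sub_eq_add_neg]

theorem isTypeSevenPair (h : IsUnitTypeSeven P) : IsTypeSevenPair (P.angle 1) (P.angle 4) := by
  obtain ⟨ψ, hψ, hclosing⟩ := h.exists_typeSevenVertex_eq
  have hangle := P.angle_mem_Ioo (by norm_num)
  refine ⟨⟨?_, (hangle 1).2⟩, ⟨?_, (hangle 4).2⟩, by rw [← hψ, ← hψ, hclosing]⟩
  · linarith [h.angle_B_A, (hangle 0).2]
  · linarith [h.angle_E_C, (hangle 2).2]

theorem exists_image_carrier_eq (hP : IsUnitTypeSeven P) (hQ : IsUnitTypeSeven Q) :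
    ∃ g : Plane ≃ᵢ Plane, g '' P.carrier = Q.carrier := by
  obtain ⟨ψP, hψP, -⟩ := hP.exists_typeSevenVertex_eq
  obtain ⟨ψQ, hψQ, -⟩ := hQ.exists_typeSevenVertex_eq
  obtain ⟨hB, hE⟩ := hP.isTypeSevenPair.unique hQ.isTypeSevenPair
  refine ⟨(ψP.trans ψQ.symm).toIsometryEquiv, ConvexPolygon.image_carrier (ψP.trans ψQ.symm) ?_⟩
  intro i
  change ψQ.symm (ψP (P.V i)) = Q.V i
  rw [hψP, hB, hE, ← hψQ, ψQ.symm_apply_apply]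

end IsUnitTypeSeven

namespace IsTypeSevenPair

variable {B E : ℝ}

theorem dist_typeSevenVertex (h : IsTypeSevenPair B E) (i : Fin 5) :
    dist (typeSevenVertex B E i) (typeSevenVertex B E (i + 1)) = 1 := by
  have hclosing := h.closing
  rw [← Complex.ofReal_sub] at hclosing
  rw [dist_eq_norm]
  fin_cases i
  · simp [typeSevenVertex]
  · simp [typeSevenVertex]
  · simp [typeSevenVertex]
  · exact (congrArg norm hclosing).trans (Complex.norm_exp_ofReal_mul_I _)
  · simp [typeSevenVertex, Complex.norm_exp]

theorem typeSevenVertex_succ_ne (h : IsTypeSevenPair B E) (i : Fin 5) :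
    typeSevenVertex B E (i + 1) ≠ typeSevenVertex B E i :=
  (dist_pos.mp (by rw [h.dist_typeSevenVertex i]; exact one_pos)).symm

theorem angle_typeSevenVertex_one (h : IsTypeSevenPair B E) :
    ∠ (typeSevenVertex B E 0) (typeSevenVertex B E 1) (typeSevenVertex B E 2) = B := by
  obtain ⟨hB, hB'⟩ := h.mem_left
  refine angle_eq_of_sub_eq_exp_mul_sub ⟨by linarith [Real.pi_pos], hB'.le⟩
    (h.typeSevenVertex_succ_ne 1) ?_
  simp [typeSevenVertex]

theorem angle_typeSevenVertex_zero (h : IsTypeSevenPair B E) :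
    ∠ (typeSevenVertex B E 4) (typeSevenVertex B E 0) (typeSevenVertex B E 1) =
      2 * Real.pi - 2 * B := by
  obtain ⟨hB, hB'⟩ := h.mem_left
  refine angle_eq_of_sub_eq_exp_mul_sub ⟨by linarith, by linarith⟩
    (h.typeSevenVertex_succ_ne 0) ?_
  have hA := exp_mul_exp_sq_eq_one (add_sub_cancel (2 * B) (2 * Real.pi))
  have hinv : Complex.exp (-(B * Complex.I)) * Complex.exp (B * Complex.I) = 1 := by
    rw [← Complex.exp_add, neg_add_cancel, Complex.exp_zero]
  simp only [typeSevenVertex, Matrix.cons_val]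
  generalize Complex.exp (↑(2 * Real.pi - 2 * B) * Complex.I) = w at *
  linear_combination Complex.exp (-(B * Complex.I)) * hA - w * Complex.exp (B * Complex.I) * hinv

theorem angle_typeSevenVertex_two (h : IsTypeSevenPair B E) :
    ∠ (typeSevenVertex B E 1) (typeSevenVertex B E 2) (typeSevenVertex B E 3) =
      2 * Real.pi - 2 * E := by
  obtain ⟨hE, hE'⟩ := h.mem_right
  refine angle_eq_of_sub_eq_exp_mul_sub ⟨by linarith, by linarith⟩
    (h.typeSevenVertex_succ_ne 2) ?_
  have hC := exp_mul_exp_sq_eq_one (add_sub_cancel (2 * E) (2 * Real.pi))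
  simp only [typeSevenVertex, Matrix.cons_val]
  linear_combination hC

theorem angle_typeSevenVertex_four (h : IsTypeSevenPair B E) :
    ∠ (typeSevenVertex B E 3) (typeSevenVertex B E 4) (typeSevenVertex B E 0) = E := by
  obtain ⟨hE, hE'⟩ := h.mem_right
  refine angle_eq_of_sub_eq_exp_mul_sub ⟨by linarith [Real.pi_pos], hE'.le⟩
    (h.typeSevenVertex_succ_ne 4) ?_
  rw [h.closing]
  simp only [typeSevenVertex, Matrix.cons_val]
  rw [sub_sub_cancel, ← Complex.exp_add, sub_mul, sub_eq_add_neg]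

theorem exists_isUnitTypeSeven (h : IsTypeSevenPair B E) :
    ∃ P : ConvexPentagon, IsUnitTypeSeven P := by
  let φ : ℂ ≃ₗᵢ[ℝ] Plane := Complex.orthonormalBasisOneI.repr
  let P : ConvexPentagon := ConvexPolygon.ofOrientPos (by norm_num)
    (V := fun i => φ (typeSevenVertex B E i))
    (o := Orientation.map (Fin 2) φ.toLinearEquiv Complex.orientation)
    fun i j hj hj' => (orient_map _ φ _ _ _).symm ▸ h.orient_pos i j hj hj'
  have hangle (i : Fin 5) : P.angle i = ∠ (typeSevenVertex B E (i - 1)) (typeSevenVertex B E i)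
      (typeSevenVertex B E (i + 1)) :=
    φ.toLinearIsometry.toAffineIsometry.angle_map _ _ _
  refine ⟨P, fun i => (φ.dist_map _ _).trans (h.dist_typeSevenVertex i), ?_, ?_⟩
  · rw [(hangle 0).trans h.angle_typeSevenVertex_zero, (hangle 1).trans h.angle_typeSevenVertex_one]
    ring
  · rw [(hangle 2).trans h.angle_typeSevenVertex_two, (hangle 4).trans h.angle_typeSevenVertex_four]
    ring

end IsTypeSevenPair

/-- there is an equilateral convex pentagon (all sides of length 1)
with `2B + A = 360°` and `2E + C = 360°` (Type 7), and it is unique up to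
isometries of the plane. -/
theorem statement_14 :
    ∃ P : ConvexPentagon, (∀ i : Fin 5, P.side i = 1) ∧
      (2 * P.angle 1 + P.angle 0 = 2 * Real.pi) ∧
      (2 * P.angle 4 + P.angle 2 = 2 * Real.pi) ∧
      ∀ Q : ConvexPentagon, (∀ i : Fin 5, Q.side i = 1) →
        (2 * Q.angle 1 + Q.angle 0 = 2 * Real.pi) →
        (2 * Q.angle 4 + Q.angle 2 = 2 * Real.pi) →
        ∃ g : Plane ≃ᵢ Plane, g '' P.carrier = Q.carrier := by
  obtain ⟨B, E, h⟩ := exists_isTypeSevenPair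
  obtain ⟨P, hP⟩ := h.exists_isUnitTypeSeven
  exact ⟨P, hP.side_eq_one, hP.angle_B_A, hP.angle_E_C,
    fun Q hside hB hE => hP.exists_image_carrier_eq ⟨hside, hB, hE⟩⟩
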